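/- Let n = m + r with m ≥ 0, r ≥ 1, and let g ∈ GL(n,ℝ) be a matrix whose last row is e_n = (0,…,0,1). Then g can be written as g = s · diag(k, 1), where k ∈ O(n−1) is an orthogonal (n−1)×(n−1) matrix (embedded in GL(n,ℝ) as the block-diagonal matrix diag(k,1)) and s ∈ GL(n,ℝ) has block form [[a, X],[0, p]] with a ∈ GL(m,ℝ), X an m×r real matrix, and p ∈ GL(r,ℝ) a matrix whose last row is e_r = (0,…,0,1). (This is the decomposition P_n = [(G_m × P_r) ⋉ M_{m×r}(ℝ)] · K_{n−1} deduced from the Iwasawa decomposition of GL(n−1,ℝ).) -/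

import Mathlib

open Matrix

lemma exists_orthogonal_triangular (N : ℕ) (h : Matrix (Fin N) (Fin N) ℝ) :
    ∃ K : Matrix (Fin N) (Fin N) ℝ, Kᵀ * K = 1 ∧ ∀ i j, j < i → (h * Kᵀ) i j = 0 := by
  let f : (Fin N)ᵒᵈ → EuclideanSpace ℝ (Fin N) := fun i => WithLp.toLp 2 (h (OrderDual.ofDual i))
  have hc : Module.finrank ℝ (EuclideanSpace ℝ (Fin N)) = Fintype.card (Fin N)ᵒᵈ := by simp
  let b := InnerProductSpace.gramSchmidtOrthonormalBasis hc f
  refine ⟨Matrix.of fun i j => b (OrderDual.toDual i) j, ?_, ?_⟩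
  · rw [mul_eq_one_comm]
    ext i j
    have := orthonormal_iff_ite.1 b.orthonormal (OrderDual.toDual j) (OrderDual.toDual i)
    simp only [PiLp.inner_apply, RCLike.inner_apply, conj_trivial] at this
    simp only [Matrix.mul_apply, Matrix.transpose_apply, Matrix.of_apply, Matrix.one_apply]
    rw [this]
    simp [eq_comm]
  · intro i j hij
    have := InnerProductSpace.gramSchmidtOrthonormalBasis_inv_triangular hc f
      (i := OrderDual.toDual i) (j := OrderDual.toDual j) (by simpa using hij)
    simp only [PiLp.inner_apply, RCLike.inner_apply, conj_trivial] at this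
    simp only [Matrix.mul_apply, Matrix.transpose_apply, Matrix.of_apply]
    exact this

/-- Let `n = m + r` with `r ≥ 1`, and let `g ∈ GL(n, ℝ)` have last row
`e_n = (0, …, 0, 1)` (i.e. `g ∈ P_n`). Then `g = s * diag(k, 1)` where `k ∈ O(n-1)` is
orthogonal (embedded as `diag(k, 1)`) and `s` has block form `[[a, X], [0, p]]` with
`a ∈ GL(m, ℝ)`, `X ∈ M_{m×r}(ℝ)`, and `p ∈ GL(r, ℝ)` with last row `e_r`. This is the
decomposition `P_n = [(G_m × P_r) ⋉ M_{m×r}(ℝ)] · K_{n-1}`. -/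
theorem klyachko_stmt_12 (m r : ℕ) (hr : 1 ≤ r) (g : GL (Fin (m + r)) ℝ)
    (hg : ∀ j : Fin (m + r),
      (↑g : Matrix (Fin (m + r)) (Fin (m + r)) ℝ) ⟨m + r - 1, by omega⟩ j
        = if (j : ℕ) = m + r - 1 then 1 else 0) :
    ∃ (kmat : Matrix (Fin (m + r - 1)) (Fin (m + r - 1)) ℝ)
      (a : Matrix (Fin m) (Fin m) ℝ) (X : Matrix (Fin m) (Fin r) ℝ)
      (p : Matrix (Fin r) (Fin r) ℝ),
      kmatᵀ * kmat = 1 ∧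
      IsUnit a ∧ IsUnit p ∧
      (∀ j : Fin r, p ⟨r - 1, by omega⟩ j = if (j : ℕ) = r - 1 then 1 else 0) ∧
      (↑g : Matrix (Fin (m + r)) (Fin (m + r)) ℝ)
        = Matrix.reindex finSumFinEquiv finSumFinEquiv (Matrix.fromBlocks a X 0 p)
          * Matrix.reindex
              (finSumFinEquiv.trans (finCongr (by omega : m + r - 1 + 1 = m + r)))
              (finSumFinEquiv.trans (finCongr (by omega : m + r - 1 + 1 = m + r)))
              (Matrix.fromBlocks kmat 0 0 (1 : Matrix (Fin 1) (Fin 1) ℝ)) := by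
  obtain ⟨q, rfl⟩ : ∃ q, r = q + 1 := ⟨r - 1, by omega⟩
  have hN : m + (q + 1) - 1 + 1 = m + (q + 1) := by omega
  set e : Fin (m + (q + 1) - 1) ⊕ Fin 1 ≃ Fin (m + (q + 1)) :=
    finSumFinEquiv.trans (finCongr hN) with he
  set G : Matrix (Fin (m + (q + 1))) (Fin (m + (q + 1))) ℝ := ↑g with hG
  obtain ⟨K, hK, hT⟩ := exists_orthogonal_triangular _ (G.submatrix e e).toBlocks₁₁
  set D := Matrix.reindex e e (Matrix.fromBlocks K 0 0 (1 : Matrix (Fin 1) (Fin 1) ℝ)) with hD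
  have hDD : Dᵀ * D = 1 := by
    rw [hD, Matrix.reindex_apply, Matrix.transpose_submatrix, Matrix.submatrix_mul_equiv,
      Matrix.fromBlocks_transpose, Matrix.fromBlocks_multiply]
    simp [hK]
  set S := G * Dᵀ with hS
  have hSD : G = S * D := by rw [hS, Matrix.mul_assoc, hDD, Matrix.mul_one]
  have hSU : IsUnit S.det := by
    have h1 : IsUnit (S * D).det := by
      rw [← hSD]; exact (Matrix.isUnit_iff_isUnit_det _).1 g.isUnit
    rw [Matrix.det_mul] at h1
    exact isUnit_of_mul_isUnit_left h1
  have hSe : S.submatrix e e = G.submatrix e e * Matrix.fromBlocks Kᵀ 0 0 1 := by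
    rw [hS, ← Matrix.submatrix_mul_equiv _ _ _ e, hD]
    congr 1
    ext x y
    rcases x with x | x <;> rcases y with y | y <;> simp [Matrix.one_apply, eq_comm]
  have hlast : ∀ y, e.symm ⟨m + (q + 1) - 1, by omega⟩ = Sum.inr y := by
    intro y
    rw [Equiv.symm_apply_eq, he]
    ext
    simp
  have hrow : ∀ j : Fin (m + (q + 1)),
      S ⟨m + (q + 1) - 1, by omega⟩ j = if (j : ℕ) = m + (q + 1) - 1 then 1 else 0 := by
    intro j
    have hGl : ∀ z, G ⟨m + (q + 1) - 1, by omega⟩ z = if (z : ℕ) = m + (q + 1) - 1 then 1 else 0 := hg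
    have hel : e (Sum.inr 0) = ⟨m + (q + 1) - 1, by omega⟩ := by
      rw [← hlast 0, Equiv.apply_symm_apply]
    have h1 := congrFun (congrFun hSe (Sum.inr 0)) (e.symm j)
    rw [Matrix.submatrix_apply, hel, Equiv.apply_symm_apply] at h1
    rw [h1, Matrix.mul_apply, Fintype.sum_sum_type]
    simp only [Matrix.submatrix_apply, hel, hGl]
    obtain ⟨y, rfl⟩ := e.surjective j
    rcases y with y | y
    · have := y.2
      simp [he]
      rw [if_neg (by omega)]
      apply Finset.sum_eq_zero
      intro x _
      have := x.2
      rw [if_neg (by omega)]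
    · simp [he, Matrix.one_apply, Subsingleton.elim y 0]
  have htri : ∀ i j : Fin (m + (q + 1)), j < i → S i j = 0 := by
    intro i j hij
    by_cases hi : (i : ℕ) = m + (q + 1) - 1
    · have : i = ⟨m + (q + 1) - 1, by omega⟩ := Fin.ext hi
      rw [this, hrow, if_neg]
      have : (j : ℕ) < i := hij
      omega
    · have hij' : (j : ℕ) < i := hij
      have hi' : (i : ℕ) < m + (q + 1) - 1 := by omega
      have hei : i = e (Sum.inl ⟨i, hi'⟩) := by ext; simp [he]
      have hej : j = e (Sum.inl ⟨j, by omega⟩) := by ext; simp [he]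
      have h1 := congrFun (congrFun hSe (Sum.inl ⟨i, hi'⟩)) (Sum.inl ⟨j, by omega⟩)
      rw [Matrix.submatrix_apply, ← hei, ← hej] at h1
      rw [h1, ← hT ⟨i, hi'⟩ ⟨j, by omega⟩ hij', Matrix.mul_apply, Fintype.sum_sum_type,
        Matrix.mul_apply]
      simp [Matrix.toBlocks₁₁]
  set B := S.submatrix (finSumFinEquiv (m := m) (n := q + 1)) finSumFinEquiv with hB
  have hB0 : B.toBlocks₂₁ = 0 := by
    ext i j
    simp only [Matrix.toBlocks₂₁, hB, Matrix.of_apply, Matrix.submatrix_apply, Matrix.zero_apply]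
    apply htri
    rw [Fin.lt_def]
    have := j.2
    simp
    omega
  have hBB : B = Matrix.fromBlocks B.toBlocks₁₁ B.toBlocks₁₂ 0 B.toBlocks₂₂ := by
    rw [← hB0, Matrix.fromBlocks_toBlocks]
  have hBU : IsUnit (B.toBlocks₁₁.det * B.toBlocks₂₂.det) := by
    rw [← Matrix.det_fromBlocks_zero₂₁ _ B.toBlocks₁₂, ← hBB, hB, Matrix.det_submatrix_equiv_self]
    exact hSU
  refine ⟨K, B.toBlocks₁₁, B.toBlocks₁₂, B.toBlocks₂₂, hK, ?_, ?_, ?_, ?_⟩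
  · exact (Matrix.isUnit_iff_isUnit_det _).2 (isUnit_of_mul_isUnit_left hBU)
  · exact (Matrix.isUnit_iff_isUnit_det _).2 (isUnit_of_mul_isUnit_right hBU)
  · intro j
    have h1 := hrow (Fin.natAdd m j)
    have h2 : (⟨m + (q + 1) - 1, by omega⟩ : Fin (m + (q + 1))) =
        Fin.natAdd m ⟨q + 1 - 1, by omega⟩ := by ext; simp
    rw [h2] at h1
    simp only [Matrix.toBlocks₂₂, hB, Matrix.of_apply, Matrix.submatrix_apply,
      finSumFinEquiv_apply_right]
    rw [h1]
    congr 1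
    simp only [Fin.val_natAdd, eq_iff_iff]
    omega
  · rw [← hBB, hSD]
    congr 1
    ext i j
    simp [hB]
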